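/- Let C be a model category, I a set, and suppose C has coproducts indexed by I. Let (A_i)_{i ∈ I} be a family of cofibrant objects of C, and let γ : C ⟶ Ho(C) denote the localization functor at the weak equivalences. Then γ(∐_{i ∈ I} A_i), together with the images under γ of the coproduct inclusions A_i ⟶ ∐_{i ∈ I} A_i, is a coproduct of the family (γ(A_i))_{i ∈ I} in Ho(C). -/

import Mathlib

open CategoryTheory CategoryTheory.Limits

universe v u

/-- `f` is a retract of `g` in the arrow category. -/
def IsRetractOf {C : Type u} [Category.{v} C] {X Y X' Y' : C}
    (f : X ⟶ Y) (g : X' ⟶ Y') : Prop :=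
  ∃ (iX : X ⟶ X') (rX : X' ⟶ X) (iY : Y ⟶ Y') (rY : Y' ⟶ Y),
    iX ≫ rX = 𝟙 X ∧ iY ≫ rY = 𝟙 Y ∧ iX ≫ g = f ≫ iY ∧ g ≫ rY = rX ≫ f

/-- A (Quillen closed) model structure on a finitely bicomplete category `C`: classes of
weak equivalences, fibrations and cofibrations satisfying the two-out-of-three axiom,
closure under retracts, the lifting axioms and the factorization axioms. -/
structure ModelStructure (C : Type u) [Category.{v} C]
    [HasFiniteLimits C] [HasFiniteColimits C] where
  /-- weak equivalences -/
  W : MorphismProperty C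
  /-- fibrations -/
  Fib : MorphismProperty C
  /-- cofibrations -/
  Cof : MorphismProperty C
  W_comp : ∀ {X Y Z : C} (f : X ⟶ Y) (g : Y ⟶ Z), W f → W g → W (f ≫ g)
  W_cancel_left : ∀ {X Y Z : C} (f : X ⟶ Y) (g : Y ⟶ Z), W f → W (f ≫ g) → W g
  W_cancel_right : ∀ {X Y Z : C} (f : X ⟶ Y) (g : Y ⟶ Z), W g → W (f ≫ g) → W f
  W_retract : ∀ {X Y X' Y' : C} (f : X ⟶ Y) (g : X' ⟶ Y'), IsRetractOf f g → W g → W f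
  Fib_retract : ∀ {X Y X' Y' : C} (f : X ⟶ Y) (g : X' ⟶ Y'), IsRetractOf f g → Fib g → Fib f
  Cof_retract : ∀ {X Y X' Y' : C} (f : X ⟶ Y) (g : X' ⟶ Y'), IsRetractOf f g → Cof g → Cof f
  lift_cof_trivFib : ∀ {A B X Y : C} (i : A ⟶ B) (p : X ⟶ Y),
    Cof i → Fib p → W p → HasLiftingProperty i p
  lift_trivCof_fib : ∀ {A B X Y : C} (i : A ⟶ B) (p : X ⟶ Y),
    Cof i → W i → Fib p → HasLiftingProperty i p
  factor_cof_trivFib : ∀ {X Y : C} (f : X ⟶ Y),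
    ∃ (Z : C) (i : X ⟶ Z) (p : Z ⟶ Y), Cof i ∧ Fib p ∧ W p ∧ i ≫ p = f
  factor_trivCof_fib : ∀ {X Y : C} (f : X ⟶ Y),
    ∃ (Z : C) (i : X ⟶ Z) (p : Z ⟶ Y), Cof i ∧ W i ∧ Fib p ∧ i ≫ p = f

namespace ModelStructure

variable {C : Type u} [Category.{v} C] [HasFiniteLimits C] [HasFiniteColimits C]

/-- An object is fibrant if the map to the terminal object is a fibration. -/
def Fibrant (M : ModelStructure C) (X : C) : Prop := M.Fib (terminal.from X)

/-- An object is cofibrant if the map from the initial object is a cofibration. -/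
def Cofibrant (M : ModelStructure C) (X : C) : Prop := M.Cof (initial.to X)

end ModelStructure

universe w

/-!
Every object of `Ho(C)` is isomorphic to the image of a fibrant object `Y`, and for `X` cofibrant
the morphisms `γ X ⟶ γ Y` are the homotopy classes of morphisms `X ⟶ Y`. For the universal property
of `γ (∐ A)` with respect to `γ Y`, a family `γ (A i) ⟶ γ Y` is represented by morphisms
`A i ⟶ Y`, which assemble to `∐ A ⟶ Y`. For uniqueness, the right homotopies between the components
of two morphisms `∐ A ⟶ Y` can all be taken with values in the same path object of `Y`, so that
they assemble to a right homotopy on `∐ A`.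
-/

open HomotopicalAlgebra

section Cofan

variable {C : Type*} [Category* C] {I : Type*}

lemma hasLiftingProperty_initial_to_of_isColimit [HasInitial C] {A : I → C} {c : Cofan A}
    (hc : IsColimit c) {X Y : C} (p : X ⟶ Y) [∀ i, HasLiftingProperty (initial.to (A i)) p] :
    HasLiftingProperty (initial.to c.pt) p where
  sq_hasLift {_ g} _ := by
    have sq (i : I) : CommSq (initial.to X) (initial.to (A i)) p (c.inj i ≫ g) :=
      ⟨initial.hom_ext _ _⟩
    exact ⟨⟨{
      l := Cofan.IsColimit.desc hc fun i ↦ (sq i).lift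
      fac_left := initial.hom_ext _ _
      fac_right := Cofan.IsColimit.hom_ext hc _ _ fun i ↦ by simp }⟩⟩

/-- Right homotopies relative to a fixed pre-path object, given on the summands of a coproduct,
assemble to a right homotopy on the coproduct. -/
def rightHomotopyOfIsColimit {A : I → C} {c : Cofan A} (hc : IsColimit c) {Y : C}
    {P : PrepathObject Y} {f g : c.pt ⟶ Y}
    (h : ∀ i, P.RightHomotopy (c.inj i ≫ f) (c.inj i ≫ g)) : P.RightHomotopy f g where
  h := Cofan.IsColimit.desc hc fun i ↦ (h i).h
  h₀ := Cofan.IsColimit.hom_ext hc _ _ fun i ↦ by simp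
  h₁ := Cofan.IsColimit.hom_ext hc _ _ fun i ↦ by simp

lemma bijective_inj_comp_of_iso {B : I → C} (d : Cofan B) {S T : C} (e : S ≅ T)
    (hS : Function.Bijective fun (f : d.pt ⟶ S) i ↦ d.inj i ≫ f) :
    Function.Bijective fun (f : d.pt ⟶ T) i ↦ d.inj i ≫ f := by
  constructor
  · intro f g hfg
    rw [← cancel_mono e.inv]
    exact hS.1 (funext fun i ↦ by simpa using congr_fun hfg i =≫ e.inv)
  · intro t
    obtain ⟨f, hf⟩ := hS.2 fun i ↦ t i ≫ e.inv
    exact ⟨f ≫ e.hom, funext fun i ↦ by simpa using congr_fun hf i =≫ e.hom⟩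

lemma nonempty_isColimit_of_bijective_of_essSurj {D : Type*} [Category* D] (G : D ⥤ C) [G.EssSurj]
    {B : I → C} (d : Cofan B)
    (hd : ∀ Y : D, Function.Bijective fun (f : d.pt ⟶ G.obj Y) i ↦ d.inj i ≫ f) :
    Nonempty (IsColimit d) := by
  have bijective_inj_comp (T : C) : Function.Bijective fun (f : d.pt ⟶ T) i ↦ d.inj i ≫ f :=
    bijective_inj_comp_of_iso d (G.objObjPreimageIso T) (hd _)
  choose desc fac using fun t : Cofan B ↦ (bijective_inj_comp t.pt).2 t.inj
  exact ⟨Cofan.IsColimit.mk d desc (fun t ↦ congr_fun (fac t)) fun t m hm ↦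
    (bijective_inj_comp t.pt).1 ((funext hm).trans (fac t).symm)⟩

end Cofan

section ModelCategory

variable {C : Type*} [Category* C] [ModelCategory C] {I : Type*} {A : I → C}
  [∀ i, IsCofibrant (A i)] {c : Cofan A}

lemma isCofibrant_of_isColimit (hc : IsColimit c) : IsCofibrant c.pt := by
  rw [isCofibrant_iff, cofibration_iff, ← trivialFibrations_llp]
  intro X Y p hp
  obtain ⟨_, _⟩ := (mem_trivialFibrations_iff p).1 hp
  exact hasLiftingProperty_initial_to_of_isColimit hc p

lemma rightHomotopyRel_iff_forall_inj (hc : IsColimit c) {Y : C} [IsFibrant Y] {f g : c.pt ⟶ Y} :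
    RightHomotopyRel f g ↔ ∀ i, RightHomotopyRel (c.inj i ≫ f) (c.inj i ≫ g) := by
  refine ⟨fun h i ↦ h.precomp (c.inj i), fun h ↦ ?_⟩
  obtain ⟨P, _⟩ := PathObject.exists_very_good Y
  -- Passing through left homotopies allows `P` to be the same for all `i`.
  exact ⟨P, ⟨rightHomotopyOfIsColimit hc fun i ↦ (h i).leftHomotopyRel.rightHomotopy P⟩⟩

variable {H : Type*} [Category* H] (L : C ⥤ H) [L.IsLocalization (weakEquivalences C)]

lemma map_eq_map_iff_forall_inj (hc : IsColimit c) {Y : C} [IsFibrant Y] {f g : c.pt ⟶ Y} :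
    L.map f = L.map g ↔ ∀ i, L.map (c.inj i ≫ f) = L.map (c.inj i ≫ g) := by
  have := isCofibrant_of_isColimit hc
  simp only [← RightHomotopyRel.iff_map_eq L]
  exact rightHomotopyRel_iff_forall_inj hc

lemma bijective_map_inj_comp (hc : IsColimit c) (Y : C) [IsFibrant Y] :
    Function.Bijective fun (f : L.obj c.pt ⟶ L.obj Y) i ↦ L.map (c.inj i) ≫ f := by
  have := isCofibrant_of_isColimit hc
  constructor
  · intro f g hfg
    obtain ⟨f, rfl⟩ := map_surjective_of_isLocalization L c.pt Y f
    obtain ⟨g, rfl⟩ := map_surjective_of_isLocalization L c.pt Y g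
    rw [map_eq_map_iff_forall_inj L hc]
    intro i
    simpa only [L.map_comp] using congr_fun hfg i
  · intro t
    choose f hf using fun i ↦ map_surjective_of_isLocalization L (A i) Y (t i)
    refine ⟨L.map (Cofan.IsColimit.desc hc f), funext fun i ↦ ?_⟩
    simp only [← L.map_comp, Cofan.IsColimit.fac, hf]

variable (A) in
theorem preservesColimit_discrete_of_isCofibrant : PreservesColimit (Discrete.functor A) L where
  preserves {c} hc := by
    have : (FibrantObject.ι ⋙ L).EssSurj :=
      Localization.essSurj _ (weakEquivalences (FibrantObject C))
    obtain ⟨hLc⟩ := nonempty_isColimit_of_bijective_of_essSurj (FibrantObject.ι ⋙ L)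
      (Cofan.mk (L.obj c.pt) fun i ↦ L.map (Cofan.inj c i))
      fun Y ↦ bijective_map_inj_comp L hc Y.obj
    exact ⟨(Cofan.isColimitMapCoconeEquiv L A c).symm hLc⟩

end ModelCategory

lemma isRetractOf_of_retractArrow {C : Type u} [Category.{v} C] {X Y X' Y' : C}
    {f : X ⟶ Y} {g : X' ⟶ Y'} (h : RetractArrow f g) : IsRetractOf f g :=
  ⟨h.i.left, h.r.left, h.i.right, h.r.right, h.retract_left, h.retract_right, h.i_w, h.r_w.symm⟩

namespace ModelStructure

variable {C : Type u} [Category.{v} C] [HasFiniteLimits C] [HasFiniteColimits C]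

/-- The model category, in the sense of `HomotopicalAlgebra.ModelCategory`, whose weak equivalences,
fibrations and cofibrations are those of `M`. It gives access to the homotopy theory of model
categories. -/
@[reducible]
def toModelCategory (M : ModelStructure C) : ModelCategory C where
  categoryWithFibrations := ⟨M.Fib⟩
  categoryWithCofibrations := ⟨M.Cof⟩
  categoryWithWeakEquivalences := ⟨M.W⟩
  cm2 :=
    { comp_mem := M.W_comp
      of_postcomp := M.W_cancel_right
      of_precomp := M.W_cancel_left }
  cm3a := ⟨fun h ↦ M.W_retract _ _ (isRetractOf_of_retractArrow h)⟩
  cm3b := ⟨fun h ↦ M.Fib_retract _ _ (isRetractOf_of_retractArrow h)⟩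
  cm3c := ⟨fun h ↦ M.Cof_retract _ _ (isRetractOf_of_retractArrow h)⟩
  cm4a i p hi hi' hp := M.lift_trivCof_fib i p hi.mem hi'.mem hp.mem
  cm4b i p hi hp hp' := M.lift_cof_trivFib i p hi.mem hp.mem hp'.mem
  cm5a.nonempty_mapFactorizationData f := by
    obtain ⟨Z, i, p, hi, hi', hp, fac⟩ := M.factor_trivCof_fib f
    exact ⟨⟨Z, i, p, fac, ⟨hi, hi'⟩, hp⟩⟩
  cm5b.nonempty_mapFactorizationData f := by
    obtain ⟨Z, i, p, hi, hp, hp', fac⟩ := M.factor_cof_trivFib f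
    exact ⟨⟨Z, i, p, fac, hi, ⟨hp, hp'⟩⟩⟩

end ModelStructure

theorem stmt_6_general {C : Type u} [Category.{v} C] [HasFiniteLimits C] [HasFiniteColimits C]
    (M : ModelStructure C) {I : Type w} (A : I → C) (hA : ∀ i, M.Cofibrant (A i))
    {H : Type*} [Category* H] (L : C ⥤ H) [hL : L.IsLocalization M.W] :
    PreservesColimit (Discrete.functor A) L :=
  letI := M.toModelCategory
  have (i : I) : IsCofibrant (A i) := ⟨hA i⟩
  have : L.IsLocalization (weakEquivalences C) := hL
  preservesColimit_discrete_of_isCofibrant A L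

/-- In a model category `C` with coproducts indexed by `I`, for a family of
cofibrant objects `A i`, the image of `∐ A` under the localization functor `γ : C ⥤ Ho(C)`,
together with the images of the coproduct inclusions, is a coproduct of the `γ(A i)` in
`Ho(C)`. -/
theorem stmt_6 {C : Type u} [Category.{v} C] [HasFiniteLimits C] [HasFiniteColimits C]
    (M : ModelStructure C) {I : Type w} [HasCoproductsOfShape I C]
    (A : I → C) (hA : ∀ i, M.Cofibrant (A i)) :
    Nonempty (IsColimit (Cofan.mk (M.W.Q.obj (∐ A)) (fun i => M.W.Q.map (Sigma.ι A i)))) := by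
  have := stmt_6_general M A hA M.W.Q
  exact ⟨isColimitOfHasCoproductOfPreservesColimit M.W.Q A⟩
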